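/- arXiv:1102.0264 — 10 statements merged into one kernel-verified Lean document; each statement's English description precedes it below -/
import Mathlib

section
/- Let M be a measurement cover on a finite set of measurements X with finite outcome set O, and let e = (e_C)_{C∈M} be a compatible (no-signalling) probabilistic empirical model over M. Then e has a global section over the semiring ℝ of all reals: there exists d : O^X → ℝ with Σ_{t : X→O} d(t) = 1 such that for every C ∈ M and every section s over C, Σ_{t : X→O, t|C = s} d(t) = e_C(s). -/
/-!
Signed weights may be corrected one context at a time. If `d` already has the prescribed marginals
on some contexts, then for a new context `C` push the defect `e C - d|C` forward along
`s ↦ (s extended by a fixed global assignment t₀)` and add it to `d`. This repairs the marginal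
on `C`. The marginal on an earlier context `D` does not change: the restriction to `D` of the
extension of `s` only depends on `s|C ∩ D`, and by compatibility the defect has zero marginal
on `C ∩ D`.
-/

open Finset

/-- Restriction of a section over `U` to a subset `V ⊆ U`. -/
def resSec {X O : Type} {U V : Finset X} (h : V ⊆ U) (s : {x // x ∈ U} → O) :
    {x // x ∈ V} → O :=
  fun v => s ⟨v.1, h v.2⟩

/-- Restriction of a global assignment `t : X → O` to the context `C`. -/
def resGlob {X O : Type} (t : X → O) (C : Finset X) : {x // x ∈ C} → O :=
  fun c => t c.1

/-- Marginal of an `R`-valued distribution on sections over `U` to `V ⊆ U`: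
`(d|V)(s) = ∑_{s' restricting to s} d(s')`. -/
def marg {X O R : Type} [DecidableEq X] [Fintype O] [DecidableEq O]
    [AddCommMonoid R] {U V : Finset X} (h : V ⊆ U)
    (d : ({x // x ∈ U} → O) → R) : ({x // x ∈ V} → O) → R :=
  fun s => ∑ s' ∈ univ.filter (fun s' => resSec h s' = s), d s'

/-- Marginal of a distribution on global assignments to the context `C`. -/
def globMarg {X O R : Type} [Fintype X] [DecidableEq X] [Fintype O] [DecidableEq O]
    [AddCommMonoid R] (d : (X → O) → R) (C : Finset X) : ({x // x ∈ C} → O) → R :=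
  fun s => ∑ t ∈ univ.filter (fun t => resGlob t C = s), d t

section Marginals

variable {X O R : Type} [DecidableEq X] [Fintype O] [DecidableEq O]

lemma marg_eq_linearMap [AddCommMonoid R] {U V : Finset X} (h : V ⊆ U)
    (d : ({x // x ∈ U} → O) → R) :
    marg h d = FunOnFinite.linearMap ℕ R (resSec h) d :=
  funext fun s => (FunOnFinite.linearMap_apply_apply ℕ R (resSec h) d s).symm

lemma marg_comp_addMonoidHom {S : Type} [AddCommMonoid R] [AddCommMonoid S] (φ : R →+ S)
    {U V : Finset X} (h : V ⊆ U) (d : ({x // x ∈ U} → O) → R) :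
    marg h (φ ∘ d) = φ ∘ marg h d :=
  funext fun _ => (map_sum φ d _).symm

lemma marg_sub [AddCommGroup R] {U V : Finset X} (h : V ⊆ U)
    (d d' : ({x // x ∈ U} → O) → R) : marg h (d - d') = marg h d - marg h d' :=
  funext fun _ => sum_sub_distrib d d'

variable [Fintype X]

lemma globMarg_eq_linearMap [AddCommMonoid R] (d : (X → O) → R) (C : Finset X) :
    globMarg d C = FunOnFinite.linearMap ℕ R (resGlob · C) d :=
  funext fun s => (FunOnFinite.linearMap_apply_apply ℕ R (resGlob · C) d s).symm

lemma globMarg_add [AddCommMonoid R] (d d' : (X → O) → R) (C : Finset X) :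
    globMarg (d + d') C = globMarg d C + globMarg d' C := by
  simp only [globMarg_eq_linearMap, map_add]

lemma marg_globMarg [AddCommMonoid R] (d : (X → O) → R) {C V : Finset X} (h : V ⊆ C) :
    marg h (globMarg d C) = globMarg d V := by
  simp only [marg_eq_linearMap, globMarg_eq_linearMap]
  exact (LinearMap.congr_fun (FunOnFinite.linearMap_comp ℕ R (resGlob · C) (resSec h)) d).symm

lemma sum_globMarg [AddCommMonoid R] (d : (X → O) → R) (C : Finset X) :
    ∑ s, globMarg d C s = ∑ t, d t :=
  sum_fiberwise univ (resGlob · C) d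

end Marginals

section Extension

variable {X O R : Type}

/-- The extension of a section `s` over `C` to a global assignment which agrees with `t₀`
off `C`. -/
noncomputable def extendSec (t₀ : X → O) {C : Finset X} (s : {x // x ∈ C} → O) : X → O :=
  Function.extend Subtype.val s t₀

lemma extendSec_of_mem (t₀ : X → O) {C : Finset X} (s : {x // x ∈ C} → O) {x : X} (hx : x ∈ C) :
    extendSec t₀ s x = s ⟨x, hx⟩ :=
  Subtype.val_injective.extend_apply s t₀ ⟨x, hx⟩

lemma extendSec_of_notMem (t₀ : X → O) {C : Finset X} (s : {x // x ∈ C} → O) {x : X}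
    (hx : x ∉ C) : extendSec t₀ s x = t₀ x :=
  Function.extend_apply' s t₀ x fun ⟨c, hc⟩ => hx (hc ▸ c.2)

lemma resGlob_extendSec_self (t₀ : X → O) {C : Finset X} (s : {x // x ∈ C} → O) :
    resGlob (extendSec t₀ s) C = s :=
  funext fun c => extendSec_of_mem t₀ s c.2

lemma resGlob_extendSec_resSec_inter [DecidableEq X] (t₀ : X → O) {C : Finset X} (D : Finset X)
    (s : {x // x ∈ C} → O) :
    resGlob (extendSec t₀ (resSec (inter_subset_left : C ∩ D ⊆ C) s)) D =
      resGlob (extendSec t₀ s) D := by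
  funext ⟨x, hxD⟩
  by_cases hxC : x ∈ C
  · exact (extendSec_of_mem t₀ _ (mem_inter.2 ⟨hxC, hxD⟩)).trans (extendSec_of_mem t₀ s hxC).symm
  · exact (extendSec_of_notMem t₀ _ fun h => hxC (mem_inter.1 h).1).trans
      (extendSec_of_notMem t₀ s hxC).symm

variable [Fintype X] [DecidableEq X] [Fintype O] [DecidableEq O]

/-- The pushforward of a weight on sections over `C` along `extendSec t₀`: it gives a weight on
global assignments supported on those agreeing with `t₀` off `C`. -/
noncomputable def extendWeight [AddCommMonoid R] (t₀ : X → O) {C : Finset X}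
    (f : ({x // x ∈ C} → O) → R) : (X → O) → R :=
  FunOnFinite.linearMap ℕ R (extendSec t₀) f

lemma globMarg_extendWeight [AddCommMonoid R] (t₀ : X → O) {C : Finset X}
    (f : ({x // x ∈ C} → O) → R) (D : Finset X) :
    globMarg (extendWeight t₀ f) D =
      FunOnFinite.linearMap ℕ R (fun s => resGlob (extendSec t₀ s) D) f := by
  rw [globMarg_eq_linearMap]
  exact (LinearMap.congr_fun (FunOnFinite.linearMap_comp ℕ R (extendSec t₀) (resGlob · D)) f).symm

lemma globMarg_extendWeight_self [AddCommMonoid R] (t₀ : X → O) {C : Finset X}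
    (f : ({x // x ∈ C} → O) → R) : globMarg (extendWeight t₀ f) C = f := by
  simp only [globMarg_extendWeight, resGlob_extendSec_self]
  exact LinearMap.congr_fun (FunOnFinite.linearMap_id ℕ R _) f

lemma globMarg_extendWeight_marg_inter [AddCommMonoid R] (t₀ : X → O) {C : Finset X}
    (D : Finset X) (f : ({x // x ∈ C} → O) → R) :
    globMarg (extendWeight t₀ (marg (inter_subset_left : C ∩ D ⊆ C) f)) D =
      globMarg (extendWeight t₀ f) D := by
  rw [globMarg_extendWeight, globMarg_extendWeight, marg_eq_linearMap, ← LinearMap.comp_apply,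
    ← FunOnFinite.linearMap_comp]
  simp only [Function.comp_def, resGlob_extendSec_resSec_inter]

lemma globMarg_extendWeight_eq_zero [AddCommMonoid R] (t₀ : X → O) {C D : Finset X}
    {f : ({x // x ∈ C} → O) → R} (hf : marg (inter_subset_left : C ∩ D ⊆ C) f = 0) :
    globMarg (extendWeight t₀ f) D = 0 := by
  rw [← globMarg_extendWeight_marg_inter, hf, globMarg_extendWeight, map_zero]

lemma globMarg_add_extendWeight_self [AddCommGroup R] (t₀ : X → O) {C : Finset X}
    (f : ({x // x ∈ C} → O) → R) (d : (X → O) → R) :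
    globMarg (d + extendWeight t₀ (f - globMarg d C)) C = f := by
  rw [globMarg_add, globMarg_extendWeight_self, add_sub_cancel]

lemma globMarg_add_extendWeight_of_marg_eq [AddCommGroup R] (t₀ : X → O) {C D : Finset X}
    {f : ({x // x ∈ C} → O) → R} {d : (X → O) → R}
    (h : marg (inter_subset_left : C ∩ D ⊆ C) f =
      marg (inter_subset_right : C ∩ D ⊆ D) (globMarg d D)) :
    globMarg (d + extendWeight t₀ (f - globMarg d C)) D = globMarg d D := by
  have hdefect : marg (inter_subset_left : C ∩ D ⊆ C) (f - globMarg d C) = 0 := by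
    rw [marg_sub, h, marg_globMarg, marg_globMarg, sub_self]
  rw [globMarg_add, globMarg_extendWeight_eq_zero t₀ hdefect, add_zero]

end Extension

section Compatibility

variable {X O R : Type} [DecidableEq X] [Fintype O] [DecidableEq O]

/-- Compatibility (no-signalling) of a family of weights over the contexts in `MM`: any two of
them have the same marginal on the intersection of their contexts. The weights need not be
normalised, and `MM` need not be a cover. -/
def IsCompatible [AddCommMonoid R] (MM : Finset (Finset X))
    (e : (C : Finset X) → ({x // x ∈ C} → O) → R) : Prop :=
  ∀ C ∈ MM, ∀ C' ∈ MM,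
    marg (inter_subset_left : C ∩ C' ⊆ C) (e C) = marg (inter_subset_right : C ∩ C' ⊆ C') (e C')

lemma IsCompatible.mono [AddCommMonoid R] {MM NN : Finset (Finset X)}
    {e : (C : Finset X) → ({x // x ∈ C} → O) → R} (he : IsCompatible MM e) (h : NN ⊆ MM) :
    IsCompatible NN e :=
  fun C hC C' hC' => he C (h hC) C' (h hC')

lemma IsCompatible.comp_addMonoidHom {S : Type} [AddCommMonoid R] [AddCommMonoid S]
    {MM : Finset (Finset X)} {e : (C : Finset X) → ({x // x ∈ C} → O) → R}
    (he : IsCompatible MM e) (φ : R →+ S) : IsCompatible MM fun C => φ ∘ e C :=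
  fun C hC C' hC' => by rw [marg_comp_addMonoidHom, marg_comp_addMonoidHom, he C hC C' hC']

lemma IsCompatible.exists_globMarg_eq [Fintype X] [AddCommGroup R] [Nonempty (X → O)]
    {MM : Finset (Finset X)} {e : (C : Finset X) → ({x // x ∈ C} → O) → R}
    (he : IsCompatible MM e) : ∃ d : (X → O) → R, ∀ C ∈ MM, globMarg d C = e C := by
  obtain ⟨t₀⟩ := ‹Nonempty (X → O)›
  induction MM using Finset.induction_on with
  | empty => exact ⟨0, by simp⟩
  | insert C S _ ih =>
    obtain ⟨d, hd⟩ := ih (he.mono (subset_insert C S))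
    refine ⟨d + extendWeight t₀ (e C - globMarg d C), fun D hD => ?_⟩
    rcases mem_insert.1 hD with rfl | hDS
    · exact globMarg_add_extendWeight_self t₀ (e D) d
    · have hCD := he C (mem_insert_self C S) D hD
      rw [← hd D hDS] at hCD ⊢
      exact globMarg_add_extendWeight_of_marg_eq t₀ hCD

end Compatibility

lemma nonempty_assignment_of_cover {X O : Type} {MM : Finset (Finset X)}
    (hcov : ∀ x : X, ∃ C ∈ MM, x ∈ C) (hsec : ∀ C ∈ MM, Nonempty ({x // x ∈ C} → O)) :
    Nonempty (X → O) :=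
  Classical.nonempty_pi.2 fun x =>
    let ⟨C, hC, hx⟩ := hcov x
    (hsec C hC).map (· ⟨x, hx⟩)

theorem empirical_model_has_real_global_section_general
    {X O R : Type} [Fintype X] [DecidableEq X] [Fintype O] [DecidableEq O] [AddCommGroup R]
    [Nonempty (X → O)] {MM : Finset (Finset X)}
    {e : (C : Finset X) → ({x // x ∈ C} → O) → R} {c : R}
    (hsum : ∀ C ∈ MM, ∑ s, e C s = c) (he : IsCompatible MM e) :
    ∃ d : (X → O) → R, (∑ t, d t = c) ∧
      ∀ C ∈ MM, ∀ s : {x // x ∈ C} → O, globMarg d C s = e C s := by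
  rcases MM.eq_empty_or_nonempty with rfl | ⟨C, hC⟩
  · obtain ⟨t₀⟩ := ‹Nonempty (X → O)›
    exact ⟨Pi.single t₀ c, by simp, by simp⟩
  · obtain ⟨d, hd⟩ := he.exists_globMarg_eq
    have hmass : ∑ t, d t = c := by rw [← sum_globMarg d C, hd C hC, hsum C hC]
    exact ⟨d, hmass, fun D hD => congrFun (hd D hD)⟩

/-- Every compatible (no-signalling) probabilistic empirical model over a
measurement cover has a global section over the semiring `ℝ` of all reals: a real-valued
distribution on global assignments marginalizing to each `e_C`. -/
theorem empirical_model_has_real_global_section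
    {X O : Type} [Fintype X] [DecidableEq X] [Fintype O] [DecidableEq O]
    (MM : Finset (Finset X))
    (hcov : ∀ x : X, ∃ C ∈ MM, x ∈ C)
    (hanti : ∀ C ∈ MM, ∀ C' ∈ MM, C ⊆ C' → C = C')
    (e : (C : Finset X) → ({x // x ∈ C} → O) → NNReal)
    (hdist : ∀ C ∈ MM, ∑ s, e C s = 1)
    (hcompat : ∀ C ∈ MM, ∀ C' ∈ MM,
      marg (show C ∩ C' ⊆ C from inter_subset_left) (e C) =
      marg (show C ∩ C' ⊆ C' from inter_subset_right) (e C')) :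
    ∃ d : (X → O) → ℝ, (∑ t, d t = 1) ∧
      ∀ C ∈ MM, ∀ s : {x // x ∈ C} → O, globMarg d C s = (e C s : ℝ) := by
  have hO : Nonempty (X → O) := nonempty_assignment_of_cover hcov fun C hC =>
    univ_nonempty_iff.1 (nonempty_of_sum_ne_zero ((hdist C hC).trans_ne one_ne_zero))
  have he : IsCompatible MM e := hcompat
  exact empirical_model_has_real_global_section_general
    (fun C hC => mod_cast hdist C hC) (he.comp_addMonoidHom NNReal.toRealHom.toAddMonoidHom)
end

section
/- Let M be the incidence matrix of a measurement cover M on a finite set X with finite outcome set O, and let V be a vector of nonnegative reals indexed by the pairs (C, s) with C ∈ M and s a section over C. If the linear system M X = V has a solution with entries in ℝ≥0, then the system M X = V_b has a solution over the boolean semiring B = ({0,1}, ∨, 0, ∧, 1), where M is read as a boolean matrix and V_b is obtained from V by replacing each nonzero entry by 1. -/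
/-!
The support map `r ↦ [r ≠ 0]` turns sums of nonnegative elements into disjunctions, because no
cancellation is possible among them. Since the incidence matrix has entries `0` and `1`, applying
this map to a nonnegative solution entry by entry yields a solution of the boolean system.
-/

open Finset

theorem sup_eq_true_iff {ι : Type*} {s : Finset ι} {f : ι → Bool} :
    s.sup f = true ↔ ∃ i ∈ s, f i = true := by
  simpa only [Bool.lt_iff, true_and] using Finset.lt_sup_iff (s := s) (f := f) (a := false)

theorem sum_ne_zero_iff_exists_of_nonneg {ι R : Type*} [AddCommMonoid R] [PartialOrder R]
    [IsOrderedAddMonoid R] {s : Finset ι} {x : ι → R} (hx : ∀ i ∈ s, 0 ≤ x i) :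
    ∑ i ∈ s, x i ≠ 0 ↔ ∃ i ∈ s, x i ≠ 0 := by
  simpa only [not_forall, exists_prop] using (sum_eq_zero_iff_of_nonneg hx).not

theorem sup_decide_ne_zero_eq_decide_sum_ne_zero {ι R : Type*} [AddCommMonoid R] [PartialOrder R]
    [IsOrderedAddMonoid R] [DecidableEq R] {s : Finset ι} {x : ι → R} (hx : ∀ i ∈ s, 0 ≤ x i) :
    s.sup (fun i => decide (x i ≠ 0)) = decide (∑ i ∈ s, x i ≠ 0) := by
  rw [Bool.eq_iff_iff, sup_eq_true_iff, decide_eq_true_iff, sum_ne_zero_iff_exists_of_nonneg hx]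
  simp only [decide_eq_true_iff]

theorem boolean_solution_of_nonneg_solution_general
    {X O : Type} {R : Type*} [Fintype X] [DecidableEq X] [Fintype O] [DecidableEq O]
    [AddCommMonoid R] [PartialOrder R] [IsOrderedAddMonoid R] [DecidableEq R]
    (MM : Finset (Finset X)) (V : (C : Finset X) → ({x // x ∈ C} → O) → R)
    (x : (X → O) → R) (hx : ∀ t, 0 ≤ x t)
    (hsol : ∀ C ∈ MM, ∀ s : {x // x ∈ C} → O,
      ∑ t ∈ univ.filter (fun t => resGlob t C = s), x t = V C s) :
    ∃ xb : (X → O) → Bool,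
      ∀ C ∈ MM, ∀ s : {x // x ∈ C} → O,
        (univ.filter (fun t => resGlob t C = s)).sup xb = decide (V C s ≠ 0) := by
  refine ⟨fun t => decide (x t ≠ 0), fun C hC s => ?_⟩
  rw [← hsol C hC s]
  exact sup_decide_ne_zero_eq_decide_sum_ne_zero fun t _ => hx t

/-- If the linear system `M X = V` given by the incidence matrix of a
measurement cover has a solution with entries in the nonnegative reals, then the boolean system
`M X = V_b` has a solution over the boolean semiring `({0,1}, ∨, ∧)`, where `V_b` replaces each
nonzero entry of `V` by `1`.  (The row equation at `(C, s)` over the booleans reads: the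
supremum of the entries `X_t` over the global assignments `t` with `t|C = s` equals the
`(C,s)`-entry of `V_b`.) -/
theorem boolean_solution_of_nonneg_solution
    {X O : Type} [Fintype X] [DecidableEq X] [Fintype O] [DecidableEq O]
    (MM : Finset (Finset X))
    (hcov : ∀ x : X, ∃ C ∈ MM, x ∈ C)
    (hanti : ∀ C ∈ MM, ∀ C' ∈ MM, C ⊆ C' → C = C')
    (V : (C : Finset X) → ({x // x ∈ C} → O) → ℝ)
    (hV : ∀ C ∈ MM, ∀ s, 0 ≤ V C s)
    (x : (X → O) → ℝ) (hx : ∀ t, 0 ≤ x t)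
    (hsol : ∀ C ∈ MM, ∀ s : {x // x ∈ C} → O,
      ∑ t ∈ univ.filter (fun t => resGlob t C = s), x t = V C s) :
    ∃ xb : (X → O) → Bool,
      ∀ C ∈ MM, ∀ s : {x // x ∈ C} → O,
        (univ.filter (fun t => resGlob t C = s)).sup xb = decide (V C s ≠ 0) :=
  boolean_solution_of_nonneg_solution_general MM V x hx hsol
end

section
/- Let O = {1, ..., l}, let M be a measurement cover on a finite set X, and let e, e' be two compatible probabilistic models over M. For a partial context U (a subset of X contained in some C ∈ M), write e_U for the marginal e_C|U for any C ∈ M with U ⊆ C (this is independent of the choice of C by compatibility). If e_U(s) = e'_U(s) for every partial context U and every section s : U → O with s(m) ≠ 1 for all m ∈ U, then e_C = e'_C for every C ∈ M. -/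
open Finset

/-!
The event that `s` occurs on `U` away from `i` is the disjoint union over the outcomes `o` of the
events "`s` occurs on `U` away from `i`, and `i` yields `o`". If `s i` is the distinguished outcome
of `i`, the marginal at `s` is therefore the marginal on `U \ {i}` minus the marginals at the
sections with another outcome at `i`, all of which take one distinguished outcome fewer than `s`.
Repeating this, every marginal, and in particular the distribution itself, is recovered from the
marginals at sections avoiding the distinguished outcomes.
-/

lemma resSec_erase_eq_resSec_erase_iff {X O : Type} [DecidableEq X] {U : Finset X}
    {i : {x // x ∈ U}} {s t : {x // x ∈ U} → O} :
    resSec (erase_subset i.1 U) t = resSec (erase_subset i.1 U) s ↔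
      Function.update s i (t i) = t := by
  rw [Function.update_eq_iff, funext_iff]
  constructor
  · intro h
    exact ⟨rfl, fun m hm => (h ⟨m, mem_erase.2 ⟨Subtype.coe_ne_coe.2 hm, m.2⟩⟩).symm⟩
  · rintro ⟨-, h⟩ m
    exact (h ⟨m, mem_of_mem_erase m.2⟩ (Subtype.coe_ne_coe.1 (ne_of_mem_erase m.2))).symm

section Marginals

variable {X O R : Type} [DecidableEq X] [Fintype O] [DecidableEq O] [AddCommMonoid R]
  {U V C : Finset X}

lemma marg_self (d : ({x // x ∈ C} → O) → R) : marg (Subset.refl C) d = d := by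
  funext s
  have resSec_self (t : {x // x ∈ C} → O) : resSec (Subset.refl C) t = t := rfl
  simp [marg, resSec_self, filter_eq']

lemma marg_marg (hVU : V ⊆ U) (hUC : U ⊆ C) (d : ({x // x ∈ C} → O) → R) :
    marg hVU (marg hUC d) = marg (hVU.trans hUC) d := by
  funext s
  have resSec_resSec (t : {x // x ∈ C} → O) :
      resSec (hVU.trans hUC) t = resSec hVU (resSec hUC t) := rfl
  simp only [marg, resSec_resSec]
  simpa using sum_fiberwise_eq_sum_filter univ {t | resSec hVU t = s} (resSec hUC) d

lemma marg_erase_resSec (d : ({x // x ∈ U} → O) → R) (i : {x // x ∈ U})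
    (s : {x // x ∈ U} → O) :
    marg (erase_subset i.1 U) d (resSec (erase_subset i.1 U) s) =
      ∑ o, d (Function.update s i o) := by
  symm
  refine sum_nbij' (Function.update s i) (fun t => t i) ?_ ?_ ?_ ?_ ?_ <;>
    simp +contextual [resSec_erase_eq_resSec_erase_iff]

variable [IsCancelAdd R]

lemma apply_eq_of_marg_erase_eq {d d' : ({x // x ∈ U} → O) → R} {i : {x // x ∈ U}}
    {s : {x // x ∈ U} → O}
    (herase : marg (erase_subset i.1 U) d (resSec (erase_subset i.1 U) s) =
      marg (erase_subset i.1 U) d' (resSec (erase_subset i.1 U) s))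
    (hupdate : ∀ o ≠ s i, d (Function.update s i o) = d' (Function.update s i o)) :
    d s = d' s := by
  have hrest : ∑ o ∈ univ.erase (s i), d (Function.update s i o) =
      ∑ o ∈ univ.erase (s i), d' (Function.update s i o) :=
    sum_congr rfl fun o ho => hupdate o (ne_of_mem_erase ho)
  rw [marg_erase_resSec, marg_erase_resSec, ← add_sum_erase _ _ (mem_univ (s i)),
    ← add_sum_erase _ _ (mem_univ (s i)), hrest, Function.update_eq_self] at herase
  exact add_right_cancel herase

/-- The induction runs over the set `Z` of measurements at which the section may take its
distinguished outcome. -/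
lemma marg_eq_marg_of_avoids_outside (a : {x // x ∈ C} → O) {d d' : ({x // x ∈ C} → O) → R}
    (havoid : ∀ (U : Finset X) (hU : U ⊆ C) (s : {x // x ∈ U} → O),
      (∀ m, s m ≠ resSec hU a m) → marg hU d s = marg hU d' s)
    (Z : Finset X) (hU : U ⊆ C) (s : {x // x ∈ U} → O)
    (hs : ∀ m, s m = resSec hU a m → m.1 ∈ Z) : marg hU d s = marg hU d' s := by
  induction Z using Finset.induction_on generalizing U with
  | empty => exact havoid U hU s fun m hm => notMem_empty _ (hs m hm)
  | insert i Z _ ih =>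
    by_cases hi : ∃ hiU : i ∈ U, s ⟨i, hiU⟩ = resSec hU a ⟨i, hiU⟩
    · obtain ⟨hiU, hsi⟩ := hi
      apply apply_eq_of_marg_erase_eq (i := ⟨i, hiU⟩)
      · rw [marg_marg, marg_marg]
        refine ih _ _ fun m hm => ?_
        exact mem_of_mem_insert_of_ne (hs ⟨m, mem_of_mem_erase m.2⟩ hm) (ne_of_mem_erase m.2)
      · refine fun o ho => ih hU _ fun m hm => ?_
        obtain rfl | hmi := eq_or_ne m ⟨i, hiU⟩
        · rw [Function.update_self] at hm
          exact absurd (hm.trans hsi.symm) ho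
        · rw [Function.update_of_ne hmi] at hm
          exact mem_of_mem_insert_of_ne (hs m hm) (Subtype.coe_ne_coe.2 hmi)
    · refine ih hU s fun m hm => mem_of_mem_insert_of_ne (hs m hm) ?_
      rintro rfl
      exact hi ⟨m.2, hm⟩

theorem model_determined_by_outcome_avoiding_marginals_general
    (a : {x // x ∈ C} → O) {d d' : ({x // x ∈ C} → O) → R}
    (havoid : ∀ (U : Finset X) (hU : U ⊆ C) (s : {x // x ∈ U} → O),
      (∀ m, s m ≠ resSec hU a m) → marg hU d s = marg hU d' s) :
    d = d' := by
  rw [← marg_self d, ← marg_self d']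
  funext s
  exact marg_eq_marg_of_avoids_outside a havoid C (Subset.refl C) s fun m _ => m.2

end Marginals

/-- A compatible probabilistic model over a measurement cover is determined by
its marginal values `e_U(s)` on partial contexts `U` at sections `s` avoiding the distinguished
outcome (here outcomes are `Fin l`, with `0 : Fin l` playing the role of the outcome `1` of
`O = {1,…,l}`).  If two compatible models agree on all such values, they coincide. -/
theorem model_determined_by_outcome_avoiding_marginals
    {X : Type} [Fintype X] [DecidableEq X] {l : ℕ} [NeZero l]
    (MM : Finset (Finset X))
    (hcov : ∀ x : X, ∃ C ∈ MM, x ∈ C)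
    (hanti : ∀ C ∈ MM, ∀ C' ∈ MM, C ⊆ C' → C = C')
    (e e' : (C : Finset X) → ({x // x ∈ C} → Fin l) → NNReal)
    (hdist : ∀ C ∈ MM, ∑ s, e C s = 1)
    (hdist' : ∀ C ∈ MM, ∑ s, e' C s = 1)
    (hcompat : ∀ C ∈ MM, ∀ C' ∈ MM,
      marg (show C ∩ C' ⊆ C from inter_subset_left) (e C) =
      marg (show C ∩ C' ⊆ C' from inter_subset_right) (e C'))
    (hcompat' : ∀ C ∈ MM, ∀ C' ∈ MM,
      marg (show C ∩ C' ⊆ C from inter_subset_left) (e' C) =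
      marg (show C ∩ C' ⊆ C' from inter_subset_right) (e' C'))
    (h0 : ∀ C ∈ MM, ∀ U : Finset X, ∀ h : U ⊆ C, ∀ s : {x // x ∈ U} → Fin l,
      (∀ m, s m ≠ 0) → marg h (e C) s = marg h (e' C) s) :
    ∀ C ∈ MM, e C = e' C :=
  fun C hC => model_determined_by_outcome_avoiding_marginals_general (fun _ => 0) (h0 C hC)
end

section
/- Let O = {1,...,l}, M a measurement cover on a finite set X, and 𝒰 the set of partial contexts. For each U ∈ 𝒰 and each section s : U → O with s(m) ≠ 1 for all m ∈ U, define the global assignment v_{U,s} : X → O by v_{U,s}(m) = s(m) for m ∈ U and v_{U,s}(m) = 1 for m ∉ U, and let 𝐯_{U,s} ∈ ℝ^t be the vector whose (C, s')-entry is 1 if v_{U,s}|C = s' and 0 otherwise. Then the family of vectors {𝐯_{U,s} : U ∈ 𝒰, s : U → O with s(m) ≠ 1 for all m ∈ U}, which has Σ_{U∈𝒰}(l−1)^{|U|} members, is linearly independent in ℝ^t. -/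
/-!
Fix a partial context `U`, a section `s` over `U` avoiding the distinguished outcome `o`, and a
context `C ⊇ U`. The `(C, v_{U,s}|C)`-entry of `𝐯_{U',s'}` is nonzero only if `v_{U',s'}` agrees
with `v_{U,s}` on `C`; as `s` avoids `o` on `U`, this forces `U ⊆ U'` and `s'|U = s`. Hence, with
respect to inclusion of domains, these entries form a unitriangular matrix.
-/

open Finset

section Triangular

variable {ι α R V : Type*} [Ring R] [AddCommGroup V] [Module R V] [Preorder α]

theorem linearIndependent_of_triangular (v : ι → V) (f : ι → V →ₗ[R] R) (r : ι → α)
    (hdiag : ∀ i, IsRightRegular (f i (v i)))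
    (htri : ∀ i j, i ≠ j → f i (v j) ≠ 0 → r i < r j) :
    LinearIndependent R v := by
  refine linearIndependent_iff.mpr fun g hg ↦ ?_
  by_contra hg_ne
  obtain ⟨i, hi, hmax⟩ := g.support.exists_maximalFor r (Finsupp.support_nonempty_iff.mpr hg_ne)
  have hoff : ∀ j ∈ g.support, j ≠ i → g j * f i (v j) = 0 := by
    intro j hj hji
    by_contra hne
    have hlt : r i < r j := htri i j hji.symm (right_ne_zero_of_mul hne)
    exact hlt.not_ge (hmax hj hlt.le)
  have hgi : g i * f i (v i) = 0 := by
    calc g i * f i (v i) = ∑ j ∈ g.support, g j * f i (v j) :=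
          (Finset.sum_eq_single_of_mem i hi hoff).symm
      _ = f i (Finsupp.linearCombination R v g) := by
          simp [Finsupp.linearCombination_apply, Finsupp.sum]
      _ = 0 := by rw [hg, map_zero]
  exact Finsupp.mem_support_iff.mp hi
    (isRightRegular_iff_left_eq_zero_of_mul.mp (hdiag i) _ hgi)

end Triangular

section Assignments

variable {X O : Type}

/-- The sections `s : U → O` over partial contexts `U` of the family `M` with `s m ≠ o` for all
`m ∈ U`, bundled with their domains. They index the vectors `𝐯_{U,s}`. -/
abbrev AvoidingSection (M : Set (Finset X)) (o : O) : Type :=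
  {p : (U : Finset X) × ({x // x ∈ U} → O) // (∃ C ∈ M, p.1 ⊆ C) ∧ ∀ m, p.2 m ≠ o}

/-- The assignment `v_{U,s}`: the extension of the section `s` over `U` to all of `X` by the
constant outcome `o`. -/
def globalExtension [DecidableEq X] (o : O) {U : Finset X} (s : {x // x ∈ U} → O) : X → O :=
  fun m ↦ if h : m ∈ U then s ⟨m, h⟩ else o

/-- The 0/1-vector of a global assignment `a`, with `(C, s)`-entry `1` iff `a|C = s`. Its entries
are indexed by the contexts `C ∈ M` and the sections `s` over `C`. -/
def assignmentVector [DecidableEq O] (R : Type*) [Zero R] [One R] (M : Set (Finset X))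
    (a : X → O) : (C : {C : Finset X // C ∈ M}) × ({x // x ∈ C.1} → O) → R :=
  fun q ↦ if resGlob a q.1.1 = q.2 then 1 else 0

/-- The partial contexts of a finite family `M`, as a finite set. -/
def partialContexts [DecidableEq X] (M : Finset (Finset X)) : Finset (Finset X) :=
  M.biUnion powerset

theorem mem_partialContexts [DecidableEq X] {M : Finset (Finset X)} {U : Finset X} :
    U ∈ partialContexts M ↔ ∃ C ∈ M, U ⊆ C := by
  simp [partialContexts]

theorem filter_exists_subset_eq_partialContexts [Fintype X] [DecidableEq X]
    (M : Finset (Finset X)) :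
    univ.filter (fun U : Finset X ↦ ∃ C ∈ M, U ⊆ C) = partialContexts M := by
  ext U
  simp [mem_partialContexts]

/-- Avoiding sections as pairs of a partial context `U` and a function from `U` to the outcomes
other than `o`, which makes them easy to count. -/
def avoidingSectionEquiv (M : Set (Finset X)) (o : O) :
    AvoidingSection M o ≃
      (U : {U : Finset X // ∃ C ∈ M, U ⊆ C}) × ({x // x ∈ U.1} → {y : O // y ≠ o}) where
  toFun p := ⟨⟨p.1.1, p.2.1⟩, fun m ↦ ⟨p.1.2 m, p.2.2 m⟩⟩
  invFun q := ⟨⟨q.1.1, fun m ↦ (q.2 m).1⟩, q.1.2, fun m ↦ (q.2 m).2⟩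

theorem card_avoidingSection [DecidableEq X] [Fintype O] (M : Finset (Finset X)) (o : O) :
    Nat.card (AvoidingSection (M : Set (Finset X)) o) =
      ∑ U ∈ partialContexts M, (Fintype.card O - 1) ^ #U := by
  classical
  have hmem (U : Finset X) :
      U ∈ partialContexts M ↔ ∃ C ∈ (M : Set (Finset X)), U ⊆ C := mem_partialContexts
  let : Fintype {U : Finset X // ∃ C ∈ (M : Set (Finset X)), U ⊆ C} :=
    Fintype.subtype (partialContexts M) hmem
  calc Nat.card (AvoidingSection (M : Set (Finset X)) o)
      = ∑ U : {U : Finset X // ∃ C ∈ (M : Set (Finset X)), U ⊆ C},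
          (Fintype.card O - 1) ^ #U.1 := by
        rw [Nat.card_congr (avoidingSectionEquiv _ o), Nat.card_sigma]
        simp [Fintype.card_subtype_compl]
    _ = ∑ U ∈ partialContexts M, (Fintype.card O - 1) ^ #U :=
        (Finset.sum_subtype _ hmem fun U ↦ (Fintype.card O - 1) ^ #U).symm

variable [DecidableEq X]

theorem exists_resSec_eq_of_eqOn_globalExtension {o : O} {U U' : Finset X}
    {s : {x // x ∈ U} → O} {s' : {x // x ∈ U'} → O} (hs : ∀ m, s m ≠ o)
    (h : Set.EqOn (globalExtension o s') (globalExtension o s) U) :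
    ∃ hU : U ⊆ U', resSec hU s' = s := by
  have hsub : U ⊆ U' := by
    intro m hm
    by_contra hm'
    have hom : o = s ⟨m, hm⟩ := by simpa [globalExtension, hm, hm'] using h hm
    exact hs _ hom.symm
  refine ⟨hsub, funext fun m ↦ ?_⟩
  simpa [globalExtension, resSec, hsub m.2] using h m.2

theorem ssubset_of_eqOn_globalExtension {o : O} {U U' : Finset X}
    {s : {x // x ∈ U} → O} {s' : {x // x ∈ U'} → O} (hs : ∀ m, s m ≠ o)
    (hne : (⟨U, s⟩ : (U : Finset X) × ({x // x ∈ U} → O)) ≠ ⟨U', s'⟩)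
    (h : Set.EqOn (globalExtension o s') (globalExtension o s) U) :
    U ⊂ U' := by
  obtain ⟨hU, rfl⟩ := exists_resSec_eq_of_eqOn_globalExtension hs h
  refine hU.ssubset_of_ne ?_
  rintro rfl
  exact hne rfl

variable [DecidableEq O] (R : Type*) [Ring R]

theorem linearIndependent_assignmentVector_globalExtension (M : Set (Finset X)) (o : O) :
    LinearIndependent R fun p : AvoidingSection M o ↦
      assignmentVector R M (globalExtension o p.1.2) := by
  choose C hC hUC using fun p : AvoidingSection M o ↦ p.2.1
  refine linearIndependent_of_triangular _
    (fun p ↦ LinearMap.proj ⟨⟨C p, hC p⟩, resGlob (globalExtension o p.1.2) (C p)⟩)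
    (fun p ↦ p.1.1) (fun p ↦ ?_) fun p p' hne hentry ↦ ?_
  · simpa [assignmentVector] using isRegular_one.right
  · have hres : resGlob (globalExtension o p'.1.2) (C p) =
        resGlob (globalExtension o p.1.2) (C p) := by
      by_contra h
      exact hentry (if_neg h)
    exact ssubset_of_eqOn_globalExtension p.2.2 (Subtype.coe_injective.ne hne)
      fun m hm ↦ congrFun hres ⟨m, hUC p hm⟩

theorem extended_assignment_vectors_linearly_independent_general [Fintype O]
    (M : Finset (Finset X)) (o : O) :
    Nat.card (AvoidingSection (M : Set (Finset X)) o) =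
        ∑ U ∈ partialContexts M, (Fintype.card O - 1) ^ #U ∧
      LinearIndependent R fun p : AvoidingSection (M : Set (Finset X)) o ↦
        assignmentVector R M (globalExtension o p.1.2) :=
  ⟨card_avoidingSection M o, linearIndependent_assignmentVector_globalExtension R _ o⟩

end Assignments

/-- For each partial context `U` and each section `s` over `U` avoiding the
distinguished outcome (`0 : Fin l`, playing the role of the outcome `1` of `O = {1,…,l}`),
extend to the global assignment `v_{U,s}` taking the distinguished outcome outside `U`; the
associated 0/1-vectors `𝐯_{U,s}` in `ℝ^t` (indexed by pairs `(C, s')`, entry 1 iff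
`v_{U,s}|C = s'`) form a family of `∑_{U ∈ 𝒰} (l-1)^{|U|}` linearly independent vectors. -/
theorem extended_assignment_vectors_linearly_independent
    {X : Type} [Fintype X] [DecidableEq X] {l : ℕ} [NeZero l]
    (MM : Finset (Finset X))
    (hcov : ∀ x : X, ∃ C ∈ MM, x ∈ C)
    (hanti : ∀ C ∈ MM, ∀ C' ∈ MM, C ⊆ C' → C = C') :
    Fintype.card {p : (U : Finset X) × ({x // x ∈ U} → Fin l) //
        (∃ C ∈ MM, p.1 ⊆ C) ∧ ∀ m, p.2 m ≠ 0}
      = (∑ U ∈ univ.filter (fun U : Finset X => ∃ C ∈ MM, U ⊆ C), (l - 1) ^ U.card) ∧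
    LinearIndependent ℝ
      (fun p : {p : (U : Finset X) × ({x // x ∈ U} → Fin l) //
          (∃ C ∈ MM, p.1 ⊆ C) ∧ ∀ m, p.2 m ≠ 0} =>
        fun q : (C : {C : Finset X // C ∈ MM}) × ({x // x ∈ C.1} → Fin l) =>
          if resGlob (fun m => if h : m ∈ p.1.1 then p.1.2 ⟨m, h⟩ else 0) q.1.1 = q.2
          then (1 : ℝ) else 0) := by
  rw [filter_exists_subset_eq_partialContexts, ← Nat.card_eq_fintype_card]
  simpa only [Fintype.card_fin] using!
    extended_assignment_vectors_linearly_independent_general ℝ MM (0 : Fin l)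
end

section
/- Let O = {1,...,l}, M a measurement cover on a finite set X, 𝒰 the set of partial contexts, and D := Σ_{U∈𝒰} (l−1)^{|U|}. In ℝ^t (vectors indexed by pairs (C,s), C ∈ M, s a section over C), the linear subspace spanned by the vectors (𝟙[t|C = s])_{(C,s)} arising from global assignments t : X → O (the non-contextual models) coincides with the linear subspace spanned by the vectors of compatible probabilistic models over M (the no-signalling models), and both subspaces have dimension D. -/
open Finset

/-!
Fix an order with bottom `⊥` on the outcomes. The tail sum of a no-signalling vector at an
assignment `t`, over sections dominating `t`, can be computed in any context containing the
support `{x | t x ≠ ⊥}`: the values `⊥` impose no constraint, so the sum is a sum of a marginal to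
the intersection of two such contexts. By Möbius inversion over the sections of each context, a
no-signalling vector is determined by its tail sums at the assignments whose support is a partial
context, and there are `D` of these. The tail sum at `t` of the deterministic model of `t'` is the
indicator of `t ≤ t'`, so by Möbius inversion over the assignments, the deterministic models of
these `D` assignments are linearly independent. Hence the deterministic models span all
no-signalling vectors, and the span of the compatible models lies in between.
-/

lemma eq_zero_of_forall_sum_le_eq_zero {α R : Type*} [Fintype α] [PartialOrder α] [DecidableLE α]
    [AddCommMonoid R] {f : α → R} (h : ∀ a, ∑ b with a ≤ b, f b = 0) : f = 0 := by
  funext a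
  induction a using WellFoundedGT.induction with
  | ind a ih =>
    calc f a
        = ∑ b with a ≤ b, f b :=
          (sum_eq_single_of_mem a (by simp) fun b hb hba =>
            ih b (lt_of_le_of_ne (mem_filter.1 hb).2 hba.symm)).symm
      _ = 0 := h a

section Models

variable {X O K S : Type} [DecidableEq O]

/-- The space `K^t` of vectors indexed by pairs of a context `C ∈ M` and a section over `C`. -/
abbrev ModelSpace (K O : Type) {X : Type} (M : Finset (Finset X)) : Type :=
  ((C : {C : Finset X // C ∈ M}) × ({x // x ∈ C.1} → O)) → K

/-- The vector `𝟙[t|C = s]` of the model in which every measurement `x` has the definite outcome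
`t x`; the non-contextual models are the mixtures of these. -/
def deterministicModel (K : Type) [Zero K] [One K] [DecidableEq X] (M : Finset (Finset X))
    (t : X → O) : ModelSpace K O M :=
  fun p => if resGlob t p.1.1 = p.2 then 1 else 0

variable [DecidableEq X] [Fintype O]

/-- The vectors of compatible families of `S`-valued distributions over the contexts in `M`, read in
`K` along `φ`. For `S = ℝ≥0` and `K = ℝ` these are the compatible probabilistic models. The family
`e` has a value at every subset of `X`, but only its values on `M` are constrained and recorded. -/
def compatibleModels (O : Type) [Fintype O] [DecidableEq O] [Semiring S] [Semiring K]
    (φ : S →+* K) (M : Finset (Finset X)) : Set (ModelSpace K O M) :=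
  {v | ∃ e : (C : Finset X) → ({x // x ∈ C} → O) → S,
    (∀ C ∈ M, ∑ s, e C s = 1) ∧
    (∀ C ∈ M, ∀ C' ∈ M,
      marg (show C ∩ C' ⊆ C from inter_subset_left) (e C) =
      marg (show C ∩ C' ⊆ C' from inter_subset_right) (e C')) ∧
    v = fun p => φ (e p.1.1 p.2)}

/-- The linear no-signalling conditions: any two contexts induce the same marginal on their
intersection. Neither positivity nor normalisation is imposed. -/
def noSignalling (K O : Type) [Fintype O] [DecidableEq O] [Semiring K] (M : Finset (Finset X)) :
    Submodule K (ModelSpace K O M) where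
  carrier := {v | ∀ C C' : {C : Finset X // C ∈ M},
    marg (show C.1 ∩ C'.1 ⊆ C.1 from inter_subset_left) (fun s => v ⟨C, s⟩) =
    marg (show C.1 ∩ C'.1 ⊆ C'.1 from inter_subset_right) (fun s => v ⟨C', s⟩)}
  add_mem' hv hw C C' := by
    funext s
    simpa only [marg, Pi.add_apply, sum_add_distrib] using
      congrArg₂ (· + ·) (congrFun (hv C C') s) (congrFun (hw C C') s)
  zero_mem' C C' := by
    funext s
    simp only [marg, Pi.zero_apply, sum_const_zero]
  smul_mem' c v hv C C' := by
    funext s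
    simpa only [marg, Pi.smul_apply, smul_sum] using congrArg (c • ·) (congrFun (hv C C') s)

lemma deterministicModel_mem_compatibleModels [Semiring S] [Semiring K] (φ : S →+* K)
    (M : Finset (Finset X)) (t : X → O) :
    deterministicModel K M t ∈ compatibleModels O φ M := by
  refine ⟨fun C s => if resGlob t C = s then 1 else 0, fun C _ => by simp, fun C _ C' _ => ?_, ?_⟩
  · funext s
    simp only [marg, sum_ite_eq, mem_filter, mem_univ, true_and]
    rfl
  · funext p
    simp only [deterministicModel, apply_ite φ, map_one, map_zero]

lemma compatibleModels_subset_noSignalling [Semiring S] [Semiring K] (φ : S →+* K)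
    (M : Finset (Finset X)) : compatibleModels O φ M ⊆ noSignalling K O M := by
  rintro _ ⟨e, -, he, rfl⟩ C C'
  funext s
  simpa only [marg, map_sum] using congrArg φ (congrFun (he C.1 C.2 C'.1 C'.2) s)

lemma span_deterministicModel_le_noSignalling [Semiring K] (M : Finset (Finset X)) :
    Submodule.span K (Set.range (deterministicModel (O := O) K M)) ≤ noSignalling K O M :=
  Submodule.span_le.2 <| Set.range_subset_iff.2 fun t =>
    compatibleModels_subset_noSignalling (RingHom.id K) M
      (deterministicModel_mem_compatibleModels _ M t)

end Models

section TailSums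

variable {X O K : Type} [PartialOrder O] [OrderBot O]

lemma resGlob_le_resSec_iff {U C : Finset X} (hUC : U ⊆ C) {t : X → O}
    (ht : ∀ x ∉ U, t x = ⊥) (s : {x // x ∈ C} → O) :
    resGlob t U ≤ resSec hUC s ↔ resGlob t C ≤ s := by
  refine ⟨fun h x => ?_, fun h x => h ⟨x.1, hUC x.2⟩⟩
  by_cases hx : x.1 ∈ U
  · exact h ⟨x.1, hx⟩
  · exact (ht x.1 hx).trans_le bot_le

lemma resGlob_le_resGlob_iff {C : Finset X} {t : X → O} (ht : ∀ x ∉ C, t x = ⊥) (t' : X → O) :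
    resGlob t C ≤ resGlob t' C ↔ t ≤ t' := by
  refine ⟨fun h x => ?_, fun h x => h x.1⟩
  by_cases hx : x ∈ C
  · exact h ⟨x, hx⟩
  · exact (ht x hx).trans_le bot_le

open scoped Classical in
lemma sum_marg_resGlob_le [DecidableEq X] [Fintype O] [DecidableEq O] [AddCommMonoid K]
    {U C : Finset X} (hUC : U ⊆ C) {t : X → O} (ht : ∀ x ∉ U, t x = ⊥)
    (d : ({x // x ∈ C} → O) → K) :
    ∑ r with resGlob t U ≤ r, marg hUC d r = ∑ s with resGlob t C ≤ s, d s := by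
  simp only [marg, sum_fiberwise_eq_sum_filter, mem_filter, mem_univ, true_and,
    resGlob_le_resSec_iff hUC ht]

variable [DecidableEq X] [Fintype O]

open scoped Classical in
/-- The total weight that a vector gives, in the context `C`, to the sections dominating `t`. -/
noncomputable def tailSum [Semiring K] {M : Finset (Finset X)} (C : {C : Finset X // C ∈ M})
    (t : X → O) : ModelSpace K O M →ₗ[K] K where
  toFun v := ∑ s with resGlob t C.1 ≤ s, v ⟨C, s⟩
  map_add' v w := by simp only [Pi.add_apply, sum_add_distrib]
  map_smul' c v := by simp only [Pi.smul_apply, smul_sum, RingHom.id_apply]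

lemma eq_zero_of_forall_tailSum_eq_zero [Semiring K] {M : Finset (Finset X)}
    {v : ModelSpace K O M}
    (h : ∀ (C : {C : Finset X // C ∈ M}) (t : X → O), (∀ x ∉ C.1, t x = ⊥) → tailSum C t v = 0) :
    v = 0 := by
  classical
  funext ⟨C, s⟩
  refine congrFun (eq_zero_of_forall_sum_le_eq_zero (f := fun s => v ⟨C, s⟩) fun r => ?_) s
  let t : X → O := fun x => if hx : x ∈ C.1 then r ⟨x, hx⟩ else ⊥
  have htr : resGlob t C.1 = r := funext fun x => dif_pos x.2
  have htail : tailSum C t v = 0 := h C t fun x hx => dif_neg hx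
  rw [← htr]
  exact htail

variable [DecidableEq O]

lemma tailSum_eq_tailSum_of_mem_noSignalling [Semiring K] {M : Finset (Finset X)}
    {v : ModelSpace K O M} (hv : v ∈ noSignalling K O M) {C C' : {C : Finset X // C ∈ M}}
    {t : X → O} (hC : ∀ x ∉ C.1, t x = ⊥) (hC' : ∀ x ∉ C'.1, t x = ⊥) :
    tailSum C t v = tailSum C' t v := by
  classical
  have ht : ∀ x ∉ C.1 ∩ C'.1, t x = ⊥ := fun x hx => by
    by_cases hxC : x ∈ C.1
    · exact hC' x fun hxC' => hx (mem_inter.2 ⟨hxC, hxC'⟩)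
    · exact hC x hxC
  calc tailSum C t v
      = ∑ r with resGlob t (C.1 ∩ C'.1) ≤ r, marg inter_subset_left (fun s => v ⟨C, s⟩) r :=
        (sum_marg_resGlob_le _ ht _).symm
    _ = ∑ r with resGlob t (C.1 ∩ C'.1) ≤ r, marg inter_subset_right (fun s => v ⟨C', s⟩) r := by
        rw [hv C C']
    _ = tailSum C' t v := sum_marg_resGlob_le _ ht _

open scoped Classical in
lemma tailSum_deterministicModel [Semiring K] {M : Finset (Finset X)}
    {C : {C : Finset X // C ∈ M}} {t : X → O} (ht : ∀ x ∉ C.1, t x = ⊥) (t' : X → O) :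
    tailSum C t (deterministicModel K M t') = if t ≤ t' then 1 else 0 := by
  change ∑ s with resGlob t C.1 ≤ s, (if resGlob t' C.1 = s then (1 : K) else 0) = _
  simp only [sum_ite_eq, mem_filter, mem_univ, true_and, resGlob_le_resGlob_iff ht]

end TailSums

section Dimension

variable {X O K : Type} [Fintype X] [DecidableEq O]

/-- The measurements to which `t` assigns an outcome other than `⊥`. -/
def assignmentSupport [Bot O] (t : X → O) : Finset X :=
  univ.filter fun x => t x ≠ ⊥

lemma assignmentSupport_subset_iff [Bot O] {t : X → O} {C : Finset X} :
    assignmentSupport t ⊆ C ↔ ∀ x ∉ C, t x = ⊥ := by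
  simp only [assignmentSupport, subset_iff, mem_filter, mem_univ, true_and, ne_eq, not_imp_comm]

/-- The global assignments whose support is a partial context. They index both a basis of the
no-signalling vectors and the tail sums that determine such a vector. -/
abbrev ContextualAssignment (O : Type) [DecidableEq O] [Bot O] (M : Finset (Finset X)) : Type :=
  {t : X → O // ∃ C ∈ M, assignmentSupport t ⊆ C}

lemma linearIndependent_deterministicModel [DecidableEq X] [Finite O] [PartialOrder O] [OrderBot O]
    [Ring K] (M : Finset (Finset X)) :
    LinearIndependent K fun t : ContextualAssignment O M => deterministicModel K M t.1 := by
  classical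
  have := Fintype.ofFinite O
  refine Fintype.linearIndependent_iff.2 fun c hc =>
    congrFun (eq_zero_of_forall_sum_le_eq_zero fun t => ?_)
  obtain ⟨C, hC, htC⟩ := t.2
  have htail := congrArg (tailSum ⟨C, hC⟩ t.1) hc
  simpa only [map_sum, map_smul, map_zero, smul_eq_mul, mul_ite, mul_one, mul_zero,
    tailSum_deterministicModel (C := ⟨C, hC⟩) (assignmentSupport_subset_iff.1 htC), ← sum_filter,
    Subtype.coe_le_coe] using htail

variable [DecidableEq X] [Fintype O]

lemma card_filter_assignmentSupport_eq [Bot O] (U : Finset X) :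
    #{t : X → O | assignmentSupport t = U} = (Fintype.card O - 1) ^ #U := by
  have hpi : ({t : X → O | assignmentSupport t = U} : Finset (X → O)) =
      Fintype.piFinset fun x => if x ∈ U then univ.erase ⊥ else {⊥} := by
    ext t
    simp only [assignmentSupport, Finset.ext_iff, mem_filter, mem_univ, true_and,
      Fintype.mem_piFinset]
    refine forall_congr' fun x => ?_
    split_ifs with hx <;> simp [hx]
  simp only [hpi, Fintype.card_piFinset, apply_ite card, mem_univ, card_erase_of_mem, card_univ,
    card_singleton, prod_ite_mem, univ_inter, prod_const]

lemma card_contextualAssignment [Bot O] (M : Finset (Finset X)) :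
    Fintype.card (ContextualAssignment O M) =
      ∑ U with ∃ C ∈ M, U ⊆ C, (Fintype.card O - 1) ^ #U := by
  rw [Fintype.card_subtype, card_eq_sum_card_fiberwise (f := assignmentSupport)
    (t := {U : Finset X | ∃ C ∈ M, U ⊆ C}) fun t ht => by simpa using ht]
  refine sum_congr rfl fun U hU => ?_
  rw [← card_filter_assignmentSupport_eq, filter_filter]
  congr 1
  refine filter_congr fun t _ => and_iff_right_of_imp ?_
  rintro rfl
  exact (mem_filter.1 hU).2

variable [PartialOrder O] [OrderBot O]

lemma finrank_noSignalling_le [Ring K] [StrongRankCondition K] (M : Finset (Finset X)) :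
    Module.finrank K (noSignalling K O M) ≤ Fintype.card (ContextualAssignment O M) := by
  let tails : noSignalling K O M →ₗ[K] (ContextualAssignment O M → K) :=
    LinearMap.pi fun t => tailSum ⟨t.2.choose, t.2.choose_spec.1⟩ t.1 ∘ₗ Submodule.subtype _
  have tails_injective : Function.Injective tails := by
    refine (injective_iff_map_eq_zero tails).2 fun v hv =>
      Subtype.ext (eq_zero_of_forall_tailSum_eq_zero fun C t ht => ?_)
    have hI : ∃ C ∈ M, assignmentSupport t ⊆ C := ⟨C.1, C.2, assignmentSupport_subset_iff.2 ht⟩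
    calc tailSum C t v.1
        = tailSum ⟨hI.choose, hI.choose_spec.1⟩ t v.1 :=
          tailSum_eq_tailSum_of_mem_noSignalling v.2 ht
            (assignmentSupport_subset_iff.1 hI.choose_spec.2)
      _ = 0 := congrFun hv ⟨t, hI⟩
  simpa only [Module.finrank_fintype_fun_eq_card] using
    LinearMap.finrank_le_finrank_of_injective tails_injective

lemma card_le_finrank_span_deterministicModel [DivisionRing K] (M : Finset (Finset X)) :
    Fintype.card (ContextualAssignment O M) ≤
      Module.finrank K (Submodule.span K (Set.range (deterministicModel (O := O) K M))) := by
  rw [← finrank_span_eq_card (linearIndependent_deterministicModel (K := K) M)]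
  exact Submodule.finrank_mono <| Submodule.span_mono <|
    Set.range_subset_iff.2 fun t => Set.mem_range_self t.1

end Dimension

section Span

variable {X O K : Type} [DecidableEq X] [Fintype O] [DecidableEq O] [Nonempty O] [DivisionRing K]

theorem span_deterministicModel_eq_noSignalling [Finite X] (M : Finset (Finset X)) :
    Submodule.span K (Set.range (deterministicModel (O := O) K M)) = noSignalling K O M := by
  have := Fintype.ofFinite X
  obtain ⟨_, _⟩ := exists_wellFoundedLT O
  let : OrderBot O := WellFoundedLT.toOrderBot O
  exact Submodule.eq_of_le_of_finrank_le (span_deterministicModel_le_noSignalling M)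
    ((finrank_noSignalling_le M).trans (card_le_finrank_span_deterministicModel M))

theorem finrank_noSignalling [Fintype X] (M : Finset (Finset X)) :
    Module.finrank K (noSignalling K O M) =
      ∑ U with ∃ C ∈ M, U ⊆ C, (Fintype.card O - 1) ^ #U := by
  obtain ⟨_, _⟩ := exists_wellFoundedLT O
  let : OrderBot O := WellFoundedLT.toOrderBot O
  rw [← card_contextualAssignment]
  refine (finrank_noSignalling_le M).antisymm ?_
  rw [← span_deterministicModel_eq_noSignalling]
  exact card_le_finrank_span_deterministicModel M

end Span

theorem noncontextual_and_nosignalling_spans_coincide_general {X O S K : Type} [Fintype X]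
    [DecidableEq X] [Fintype O] [DecidableEq O] [Nonempty O] [Semiring S] [DivisionRing K]
    (φ : S →+* K) (M : Finset (Finset X)) :
    Submodule.span K {v : ModelSpace K O M | ∃ t : X → O, v = deterministicModel K M t} =
      Submodule.span K (compatibleModels O φ M) ∧
    Module.finrank K
        (Submodule.span K {v : ModelSpace K O M | ∃ t : X → O, v = deterministicModel K M t}) =
      ∑ U with ∃ C ∈ M, U ⊆ C, (Fintype.card O - 1) ^ #U := by
  have span_eq : Submodule.span K {v | ∃ t : X → O, v = deterministicModel K M t} =
      noSignalling K O M := by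
    rw [← span_deterministicModel_eq_noSignalling]
    simp only [Set.range, eq_comm]
  have deterministic_subset :
      {v | ∃ t : X → O, v = deterministicModel K M t} ⊆ compatibleModels O φ M := by
    rintro _ ⟨t, rfl⟩
    exact deterministicModel_mem_compatibleModels φ M t
  refine ⟨(Submodule.span_mono deterministic_subset).antisymm ?_, ?_⟩
  · rw [span_eq]
    exact Submodule.span_le.2 (compatibleModels_subset_noSignalling φ M)
  · rw [span_eq, finrank_noSignalling]

/-- In `ℝ^t` (vectors indexed by pairs `(C, s)` of a context and a section over
it), the subspace spanned by the vectors `(𝟙[t|C = s])` of global assignments `t : X → O` (the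
non-contextual models) coincides with the subspace spanned by the vectors of compatible
probabilistic models (the no-signalling models), and both have dimension
`D = ∑_{U ∈ 𝒰} (l-1)^{|U|}`. -/
theorem noncontextual_and_nosignalling_spans_coincide
    {X : Type} [Fintype X] [DecidableEq X] {l : ℕ} (hl : 1 ≤ l)
    (MM : Finset (Finset X))
    (hcov : ∀ x : X, ∃ C ∈ MM, x ∈ C)
    (hanti : ∀ C ∈ MM, ∀ C' ∈ MM, C ⊆ C' → C = C') :
    (Submodule.span ℝ
      { v : ((C : {C : Finset X // C ∈ MM}) × ({x // x ∈ C.1} → Fin l)) → ℝ |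
        ∃ t : X → Fin l, v = fun p => if resGlob t p.1.1 = p.2 then (1 : ℝ) else 0 }
      = Submodule.span ℝ
      { v : ((C : {C : Finset X // C ∈ MM}) × ({x // x ∈ C.1} → Fin l)) → ℝ |
        ∃ e : (C : Finset X) → ({x // x ∈ C} → Fin l) → NNReal,
          (∀ C ∈ MM, ∑ s, e C s = 1) ∧
          (∀ C ∈ MM, ∀ C' ∈ MM,
            marg (show C ∩ C' ⊆ C from inter_subset_left) (e C) =
            marg (show C ∩ C' ⊆ C' from inter_subset_right) (e C')) ∧
          v = fun p => (e p.1.1 p.2 : ℝ) }) ∧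
    Module.finrank ℝ ↥(Submodule.span ℝ
      { v : ((C : {C : Finset X // C ∈ MM}) × ({x // x ∈ C.1} → Fin l)) → ℝ |
        ∃ t : X → Fin l, v = fun p => if resGlob t p.1.1 = p.2 then (1 : ℝ) else 0 })
      = ∑ U ∈ univ.filter (fun U : Finset X => ∃ C ∈ MM, U ⊆ C), (l - 1) ^ U.card := by
  have : Nonempty (Fin l) := ⟨⟨0, hl⟩⟩
  have h := noncontextual_and_nosignalling_spans_coincide_general (O := Fin l) NNReal.toRealHom MM
  rwa [Fintype.card_fin] at h
end

section
/- Consider the measurement set X = {a, a', b, b'} with outcome set O = {0,1} and the four contexts {a,b}, {a',b}, {a,b'}, {a',b'}. Let the Bell model assign to each context the following probabilities on joint outcomes (in the order (0,0),(1,0),(0,1),(1,1)): context {a,b}: 1/2, 0, 0, 1/2; context {a',b}: 3/8, 1/8, 1/8, 3/8; context {a,b'}: 3/8, 1/8, 1/8, 3/8; context {a',b'}: 1/8, 3/8, 3/8, 1/8. Then there is no probability distribution d on the set of global assignments {a,a',b,b'} → {0,1} (i.e. d : O^X → ℝ≥0 with Σ d = 1) such that for each context C, the marginal of d on C equals the given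 distribution. -/
/-!
Under nonnegative weights, the weight of the event that two random variables differ is a
pseudometric on random variables. Going from `a'` to `b'` through `b` and `a` therefore gives
`P(a' ≠ b') ≤ P(a' ≠ b) + P(b ≠ a) + P(a ≠ b')`, whereas the Bell table would require
`3/4 ≤ 1/4 + 0 + 1/4`.
-/

open Finset

/-- The probability table of the Bell model.  Alice's measurements are `a = 0`, `a' = 1` and
Bob's are `b = 0`, `b' = 1` (indices `i j : Fin 2`); outcomes `0, 1` are `false, true`. -/
noncomputable def bellTable (i j : Fin 2) (x y : Bool) : ℝ :=
  if i = 0 ∧ j = 0 then (if x = y then 1/2 else 0)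
  else if i = 1 ∧ j = 1 then (if x = y then 1/8 else 3/8)
  else (if x = y then 3/8 else 1/8)

section Disagreement

variable {Ω β R : Type*} [Fintype Ω] [DecidableEq β] [AddCommMonoid R]

/-- The total weight of the points at which `f` and `g` differ: the probability `P(f ≠ g)` when
`d` is a probability distribution. -/
def disagreement (d : Ω → R) (f g : Ω → β) : R :=
  ∑ ω with f ω ≠ g ω, d ω

lemma disagreement_comm (d : Ω → R) (f g : Ω → β) :
    disagreement d f g = disagreement d g f := by
  simp only [disagreement, ne_comm]

lemma disagreement_eq_sum_offDiag [Fintype β] (d : Ω → R) (f g : Ω → β) :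
    disagreement d f g =
      ∑ p ∈ (univ : Finset β).offDiag, ∑ ω with f ω = p.1 ∧ g ω = p.2, d ω := by
  have mem_offDiag_of_ne : ∀ ω ∈ univ.filter (fun ω => f ω ≠ g ω),
      (f ω, g ω) ∈ (univ : Finset β).offDiag := by simp
  rw [disagreement, ← sum_fiberwise_of_maps_to mem_offDiag_of_ne]
  refine sum_congr rfl fun p hp => sum_congr ?_ fun _ _ => rfl
  have hp_ne : p.1 ≠ p.2 := (mem_offDiag.mp hp).2.2
  ext ω
  simp only [mem_filter, mem_univ, true_and, Prod.ext_iff]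
  exact and_iff_right_of_imp fun ⟨hf, hg⟩ => hf ▸ hg ▸ hp_ne

variable [PartialOrder R] [IsOrderedAddMonoid R] {d : Ω → R}

lemma disagreement_triangle (d_nonneg : ∀ ω, 0 ≤ d ω) (f g h : Ω → β) :
    disagreement d f h ≤ disagreement d f g + disagreement d g h := by
  classical
  calc disagreement d f h ≤ ∑ ω with f ω ≠ g ω ∨ g ω ≠ h ω, d ω :=
        sum_le_sum_of_subset_of_nonneg (monotone_filter_right _ fun ω _ hfh =>
          (hfh.ne_or_ne (g ω)).imp_right Ne.symm) fun ω _ _ => d_nonneg ω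
    _ ≤ disagreement d f g + disagreement d g h := by
        rw [filter_or, disagreement, disagreement, ← sum_union_inter]
        exact le_add_of_nonneg_right (sum_nonneg fun ω _ => d_nonneg ω)

lemma disagreement_bell_inequality (d_nonneg : ∀ ω, 0 ≤ d ω) (a a' b b' : Ω → β) :
    disagreement d a' b' ≤ disagreement d a' b + disagreement d a b + disagreement d a b' :=
  calc disagreement d a' b' ≤ disagreement d a' a + disagreement d a b' :=
        disagreement_triangle d_nonneg a' a b'
    _ ≤ disagreement d a' b + disagreement d b a + disagreement d a b' := by
        gcongr
        exact disagreement_triangle d_nonneg a' b a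
    _ = disagreement d a' b + disagreement d a b + disagreement d a b' := by
        rw [disagreement_comm d b a]

end Disagreement

lemma sum_offDiag_bellTable (i j : Fin 2) :
    ∑ p ∈ (univ : Finset Bool).offDiag, bellTable i j p.1 p.2 =
      if i = 0 ∧ j = 0 then 0 else if i = 1 ∧ j = 1 then 3 / 4 else 1 / 4 := by
  have offDiag_bool : (univ : Finset Bool).offDiag = {(false, true), (true, false)} := by decide
  rw [offDiag_bool, sum_pair (by decide)]
  simp only [bellTable, reduceCtorEq, if_false]
  split_ifs <;> norm_num

/-- The Bell model has no global section: there is no probability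
distribution `d` on the global assignments (pairs of functions giving Alice's and Bob's
outcomes for each of their two measurements) whose marginal at each context `(i, j)` and joint
outcome `(x, y)` equals the Bell table entry. -/
theorem bell_model_has_no_global_section :
    ¬ ∃ d : (Fin 2 → Bool) × (Fin 2 → Bool) → ℝ,
      (∀ g, 0 ≤ d g) ∧ (∑ g, d g = 1) ∧
      ∀ i j : Fin 2, ∀ x y : Bool,
        (∑ g ∈ univ.filter
            (fun g : (Fin 2 → Bool) × (Fin 2 → Bool) => g.1 i = x ∧ g.2 j = y), d g)
          = bellTable i j x y := by
  rintro ⟨d, d_nonneg, -, d_marginal⟩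
  have disagreement_eq (i j : Fin 2) : disagreement d (fun g => g.1 i) (fun g => g.2 j) =
      if i = 0 ∧ j = 0 then 0 else if i = 1 ∧ j = 1 then 3 / 4 else 1 / 4 := by
    simp only [disagreement_eq_sum_offDiag, d_marginal, sum_offDiag_bellTable]
  have bell_inequality := disagreement_bell_inequality d_nonneg
    (fun g => g.1 0) (fun g => g.1 1) (fun g => g.2 0) (fun g => g.2 1)
  simp only [disagreement_eq] at bell_inequality
  norm_num at bell_inequality
end

section
/- Consider the measurement set X = {a, a', b, b'} with outcome set O = {0,1} and the four contexts {a,b}, {a',b}, {a,b'}, {a',b'}. Define the Hardy supports: S_{{a,b}} = all four sections over {a,b}; S_{{a',b}} = all sections over {a',b} except the one sending both to 0; S_{{a,b'}} = all sections over {a,b'} except the one sending both to 0; S_{{a',b'}} = all sections over {a',b'} except the one sending both to 1. Then there is no nonempty set T of global assignments X → {0,1} such that for each of the four contexts C, the set {t|C : t ∈ T} equals S_C (i.e. the possibilistic Hardy model has no global section over the boolean semiring). -/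
open Finset

/-- The supports of the possibilistic Hardy model.  Alice's measurements are `a = 0`, `a' = 1`
and Bob's are `b = 0`, `b' = 1` (indices `i j : Fin 2`); outcomes `0, 1` are `false, true`.
Context `{a, b}` has full support; contexts `{a', b}` and `{a, b'}` exclude the joint outcome
`(0, 0)`; context `{a', b'}` excludes the joint outcome `(1, 1)`. -/
def hardySupport (i j : Fin 2) : Set (Bool × Bool) :=
  if i = 0 ∧ j = 0 then Set.univ
  else if i = 1 ∧ j = 1 then {p | p ≠ (true, true)}
  else {p | p ≠ (false, false)}

/-!
A boolean global section extends each locally possible section to a global assignment all of whose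
restrictions are possible. For the Hardy model the section `a = b = 0` has no such extension: the
supports over `{a', b}` and `{a, b'}` force `a' = 1` and `b' = 1`, which the support over `{a', b'}`
excludes.
-/

section Bipartite

variable {ι κ α β : Type*}

/-- The boolean marginal to the context `{i, j}` of a set `T` of global assignments, i.e. the set of
restrictions of its elements. A global assignment is a pair, one component for each party. -/
def booleanMarginal (T : Set ((ι → α) × (κ → β))) (i : ι) (j : κ) : Set (α × β) :=
  {p | ∃ g ∈ T, g.1 i = p.1 ∧ g.2 j = p.2}

/-- A global assignment is consistent with a family of supports `S` if its restriction to every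
context is a possible section. -/
def IsConsistentWith (S : ι → κ → Set (α × β)) (g : (ι → α) × (κ → β)) : Prop :=
  ∀ i j, (g.1 i, g.2 j) ∈ S i j

/-- Logical contextuality of a family of supports `S` at the section `p` over the context `{i, j}`:
`p` is possible but extends to no global assignment consistent with `S`. -/
def IsLogicallyContextualAt (S : ι → κ → Set (α × β)) (i : ι) (j : κ) (p : α × β) : Prop :=
  p ∈ S i j ∧ ∀ g, IsConsistentWith S g → (g.1 i, g.2 j) ≠ p

variable {S : ι → κ → Set (α × β)}

theorem isConsistentWith_of_booleanMarginal_subset {T : Set ((ι → α) × (κ → β))}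
    (hT : ∀ i j, booleanMarginal T i j ⊆ S i j) {g : (ι → α) × (κ → β)} (hg : g ∈ T) :
    IsConsistentWith S g :=
  fun i j ↦ hT i j ⟨g, hg, rfl, rfl⟩

theorem IsLogicallyContextualAt.not_exists_booleanMarginal_eq {i : ι} {j : κ} {p : α × β}
    (hp : IsLogicallyContextualAt S i j p) :
    ¬ ∃ T : Set ((ι → α) × (κ → β)), ∀ i j, booleanMarginal T i j = S i j := by
  rintro ⟨T, hT⟩
  obtain ⟨possible, no_extension⟩ := hp
  obtain ⟨g, hg, hgi, hgj⟩ : p ∈ booleanMarginal T i j := (hT i j).symm ▸ possible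
  have consistent : IsConsistentWith S g :=
    isConsistentWith_of_booleanMarginal_subset (fun i j ↦ (hT i j).subset) hg
  exact no_extension g consistent (Prod.ext hgi hgj)

theorem isLogicallyContextualAt_of_forall_notMem {i i' : ι} {j j' : κ} {x : α} {y : β}
    (hxy : (x, y) ∈ S i j)
    (h : ∀ u v, (u, y) ∈ S i' j → (x, v) ∈ S i j' → (u, v) ∉ S i' j') :
    IsLogicallyContextualAt S i j (x, y) := by
  refine ⟨hxy, fun g hg hgxy ↦ ?_⟩
  obtain ⟨rfl, rfl⟩ := Prod.mk.inj hgxy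
  exact h (g.1 i') (g.2 j') (hg i' j) (hg i j') (hg i' j')

theorem hardy_model_has_no_boolean_global_section_general {i i' : ι} {j j' : κ} {x : α} {y : β}
    (hxy : (x, y) ∈ S i j)
    (h : ∀ u v, (u, y) ∈ S i' j → (x, v) ∈ S i j' → (u, v) ∉ S i' j') :
    ¬ ∃ T : Set ((ι → α) × (κ → β)), ∀ i j, booleanMarginal T i j = S i j :=
  (isLogicallyContextualAt_of_forall_notMem hxy h).not_exists_booleanMarginal_eq

end Bipartite

theorem false_false_mem_hardySupport_zero_zero : (false, false) ∈ hardySupport 0 0 := by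
  simp [hardySupport]

theorem mk_false_mem_hardySupport_one_zero {u : Bool} :
    (u, false) ∈ hardySupport 1 0 ↔ u = true := by
  simp [hardySupport]

theorem false_mk_mem_hardySupport_zero_one {v : Bool} :
    (false, v) ∈ hardySupport 0 1 ↔ v = true := by
  simp [hardySupport]

theorem true_true_notMem_hardySupport_one_one : (true, true) ∉ hardySupport 1 1 := by
  simp [hardySupport]

theorem notMem_hardySupport_one_one {u v : Bool} (hu : (u, false) ∈ hardySupport 1 0)
    (hv : (false, v) ∈ hardySupport 0 1) : (u, v) ∉ hardySupport 1 1 := by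
  rw [mk_false_mem_hardySupport_one_zero.mp hu, false_mk_mem_hardySupport_zero_one.mp hv]
  exact true_true_notMem_hardySupport_one_one

/-- The possibilistic Hardy model has no global section over the boolean
semiring: there is no nonempty set `T` of global assignments whose set of restrictions to each
context equals the corresponding Hardy support. -/
theorem hardy_model_has_no_boolean_global_section :
    ¬ ∃ T : Set ((Fin 2 → Bool) × (Fin 2 → Bool)), T.Nonempty ∧
      ∀ i j : Fin 2,
        {p : Bool × Bool | ∃ g ∈ T, g.1 i = p.1 ∧ g.2 j = p.2} = hardySupport i j :=
  fun ⟨T, _, hT⟩ ↦ hardy_model_has_no_boolean_global_section_general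
    false_false_mem_hardySupport_zero_zero (fun _ _ ↦ notMem_hardySupport_one_one) ⟨T, hT⟩
end

section
/- For every n ≥ 3, the n-partite GHZ model is strongly contextual; concretely: there is no pair of functions x, y : {1,...,n} → {0,1} such that for every subset S ⊆ {1,...,n}, writing N(S) := Σ_{i∈S} y(i) + Σ_{i∉S} x(i), it holds that N(S) is even whenever |S| ≡ 0 (mod 4), and N(S) is odd whenever |S| ≡ 2 (mod 4). -/
open Finset

/-!
Mermin's parity argument. Take three parties `a`, `b`, `c` and the four contexts in which the set
of parties measuring `Y` is `∅`, `{a, b}`, `{a, c}` or `{b, c}`. Each measurement occurs in an even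
number of them, so for any global assignment the four outcome sums have an even total. The supports
force one of these sums to be even and three to be odd, hence an odd total.
-/

section OutcomeSum

variable {ι M : Type*} [Fintype ι] [DecidableEq ι] [AddCommMonoid M]

/-- The sum `N(S)` of the outcomes that the global assignment `x` (for the `X` measurements) and
`y` (for the `Y` measurements) gives in the context where exactly the parties in `S` measure `Y`.
For outcomes in `{0, 1} ⊆ ℕ` it is the number of 1's, whose parity defines the GHZ support. -/
def outcomeSum (x y : ι → M) (S : Finset ι) : M :=
  ∑ i ∈ S, y i + ∑ i ∈ Sᶜ, x i

theorem outcomeSum_eq_sum_piecewise (x y : ι → M) (S : Finset ι) :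
    outcomeSum x y S = ∑ i, S.piecewise y x i := by
  rw [sum_piecewise, univ_inter, ← compl_eq_univ_sdiff, outcomeSum]

theorem even_outcomeSum_empty_add_pairs (x y : ι → M) {a b c : ι}
    (hab : a ≠ b) (hac : a ≠ c) (hbc : b ≠ c) :
    Even (outcomeSum x y ∅ + outcomeSum x y {a, b} + outcomeSum x y {a, c} +
      outcomeSum x y {b, c}) := by
  simp only [outcomeSum_eq_sum_piecewise, ← sum_add_distrib]
  refine even_sum _ fun i _ ↦ ?_
  by_cases ha : i = a
  · subst ha
    exact ⟨x i + y i, by simp [hab, hac]; abel⟩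
  by_cases hb : i = b
  · subst hb
    exact ⟨x i + y i, by simp [ha, hbc]; abel⟩
  by_cases hc : i = c
  · subst hc
    exact ⟨x i + y i, by simp [ha, hb]; abel⟩
  · exact ⟨x i + x i, by simp [ha, hb, hc]; abel⟩

end OutcomeSum

theorem ghz_strongly_contextual_general {ι : Type*} [Fintype ι] [DecidableEq ι]
    (hι : 3 ≤ Fintype.card ι) :
    ¬ ∃ x y : ι → ℕ,
      Even (outcomeSum x y ∅) ∧ ∀ S : Finset ι, #S = 2 → Odd (outcomeSum x y S) := by
  rintro ⟨x, y, h_empty, h_pair⟩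
  obtain ⟨a, b, c, hab, hac, hbc⟩ := Fintype.two_lt_card_iff.mp hι
  have h_even := even_outcomeSum_empty_add_pairs x y hab hac hbc
  have h_odd : Odd (outcomeSum x y ∅ + outcomeSum x y {a, b} + outcomeSum x y {a, c} +
      outcomeSum x y {b, c}) :=
    ((h_empty.add_odd (h_pair _ (card_pair hab))).add_odd (h_pair _ (card_pair hac))).add_odd
      (h_pair _ (card_pair hbc))
  exact Nat.not_even_iff_odd.mpr h_odd h_even

/-- For every `n ≥ 3` the `n`-partite GHZ model is strongly contextual:
there is no pair of outcome assignments `x, y : Fin n → Fin 2` (for the `X_i` and `Y_i`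
measurements) such that for every subset `S` of the parties, the number
`N(S) = ∑_{i ∈ S} y(i) + ∑_{i ∉ S} x(i)` is even whenever `|S| ≡ 0 (mod 4)` and odd whenever
`|S| ≡ 2 (mod 4)`. -/
theorem ghz_strongly_contextual (n : ℕ) (hn : 3 ≤ n) :
    ¬ ∃ x y : Fin n → Fin 2,
      ∀ S : Finset (Fin n),
        (S.card % 4 = 0 → Even ((∑ i ∈ S, (y i : ℕ)) + ∑ i ∈ Sᶜ, (x i : ℕ))) ∧
        (S.card % 4 = 2 → Odd ((∑ i ∈ S, (y i : ℕ)) + ∑ i ∈ Sᶜ, (x i : ℕ))) := by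
  rintro ⟨x, y, h⟩
  exact ghz_strongly_contextual_general (by simpa using hn)
    ⟨fun i ↦ x i, fun i ↦ y i, (h ∅).1 rfl, fun S hS ↦ (h S).2 (by rw [hS])⟩
end

section
/- Let M be a measurement cover on a finite set X. Suppose there exists a function s : X → {0,1} such that every context C ∈ M contains exactly one measurement m with s(m) = 1. Then every common divisor of the cardinalities |M(m)| for m ∈ X, where M(m) := {C ∈ M : m ∈ C}, divides |M|. -/
open Finset

/-! Count the pairs `(C, m)` with `m ∈ C` and `s m = true` in two ways: each context contributes
exactly one pair, and each `m` with `s m = true` contributes `|M(m)|`. Hence `|M|` is the sum of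
the numbers `|M(m)|` over the measurements sent to 1. -/

section DoubleCounting

variable {X : Type*} [DecidableEq X] (MM : Finset (Finset X)) (p : X → Prop) [DecidablePred p]

theorem sum_card_filter_eq_sum_card_filter_mem :
    ∑ C ∈ MM, #{m ∈ C | p m} = ∑ m ∈ MM.biUnion id with p m, #{C ∈ MM | m ∈ C} := by
  have filter_eq_bipartiteAbove {C : Finset X} (hC : C ∈ MM) :
      {m ∈ C | p m} = bipartiteAbove (fun C m ↦ m ∈ C) {m ∈ MM.biUnion id | p m} C := by
    grind [mem_bipartiteAbove]
  calc
    ∑ C ∈ MM, #{m ∈ C | p m}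
      = ∑ C ∈ MM, #(bipartiteAbove (fun C m ↦ m ∈ C) {m ∈ MM.biUnion id | p m} C) :=
        sum_congr rfl fun _ hC ↦ congrArg card (filter_eq_bipartiteAbove hC)
    _ = ∑ m ∈ MM.biUnion id with p m, #{C ∈ MM | m ∈ C} :=
        sum_card_bipartiteAbove_eq_sum_card_bipartiteBelow _

variable {MM p}

theorem dvd_sum_card_filter {d : ℕ} (hd : ∀ m, p m → d ∣ #{C ∈ MM | m ∈ C}) :
    d ∣ ∑ C ∈ MM, #{m ∈ C | p m} := by
  rw [sum_card_filter_eq_sum_card_filter_mem]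
  exact dvd_sum fun m hm ↦ hd m (mem_filter.mp hm).2

end DoubleCounting

theorem ks_global_section_divisibility_general {X : Type*} [DecidableEq X]
    (MM : Finset (Finset X)) (s : X → Bool) (hs : ∀ C ∈ MM, #{m ∈ C | s m = true} = 1)
    (d : ℕ) (hd : ∀ m, s m = true → d ∣ #{C ∈ MM | m ∈ C}) : d ∣ #MM := by
  rw [card_eq_sum_ones, ← sum_congr rfl hs]
  exact dvd_sum_card_filter hd

/-- If some 0/1-assignment `s` on the measurements satisfies the
Kochen–Specker formula for a measurement cover `M` (every context contains exactly one
measurement sent to 1), then every common divisor of the numbers `|M(m)|` (the number of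
contexts containing `m`), for `m ∈ X`, divides `|M|`. -/
theorem ks_global_section_divisibility
    {X : Type} [Fintype X] [DecidableEq X]
    (MM : Finset (Finset X))
    (hcov : ∀ x : X, ∃ C ∈ MM, x ∈ C)
    (hanti : ∀ C ∈ MM, ∀ C' ∈ MM, C ⊆ C' → C = C')
    (s : X → Bool)
    (hs : ∀ C ∈ MM, (C.filter (fun m => s m = true)).card = 1) :
    ∀ d : ℕ, (∀ m : X, d ∣ (MM.filter (fun C => m ∈ C)).card) → d ∣ MM.card :=
  fun d hd ↦ ks_global_section_divisibility_general MM s hs d fun m _ ↦ hd m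
end

section
/- Let H = ℂ^n, let ρ be a positive semidefinite n×n complex matrix with trace 1, let O be a finite set of outcomes, and let C, C' be finite sets of measurements. For each measurement m ∈ C ∪ C' let (P_m^o)_{o∈O} be a family of orthogonal projection matrices with Σ_{o∈O} P_m^o = I, such that P_m^o and P_{m'}^{o'} commute for all outcomes o, o' whenever m ≠ m' both lie in C, and likewise whenever m ≠ m' both lie in C'. For a section s : U → O over a set U of measurements whose projections pairwise commute, let P_s := Π_{m∈U} P_m^{s(m)}, and define ρ_U(s) := Tr(ρ P_s). Then for every section s₀ : C ∩ C' → O: Σ_{s : C→O, s|C∩C' = s₀} ρ_C(s) = Σ_{s' : C'→O, s'|C∩C' = s₀} ρ_{C'}(s') (and both sums equal ρ_{C∩C'}(s₀)). -/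
open Finset
open scoped ComplexOrder

/-- The projector `P_s` associated with a section `s` over a set `U` of measurements: the
product `∏_{m ∈ U} P_m^{s(m)}` (taken in increasing order of `m`; when the projections
pairwise commute this is the product in any order). -/
noncomputable def sectionProj {d : ℕ} {Meas O : Type} [LinearOrder Meas]
    (P : Meas → O → Matrix (Fin d) (Fin d) ℂ) (U : Finset Meas)
    (s : {x // x ∈ U} → O) : Matrix (Fin d) (Fin d) ℂ :=
  ((U.attach.sort (· ≤ ·)).map (fun m => P m.1 (s m))).prod

/-!
Multiplication distributes over addition without commutativity, so summing `P_s` over the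
sections `s` of `U` that restrict to `s₀` amounts to replacing each factor `P_m^{s(m)}` with
`m ∉ V` by `∑ o, P_m^o = 1` while the factors with `m ∈ V` stay at `P_m^{s₀(m)}`. The units drop
out and `P_{s₀}` remains. Marginalising from `C` and from `C'` thus leads to the same operator on
`C ∩ C'`, and every additive functional, such as `X ↦ Tr(ρ X)`, inherits this.
-/

section SortedProd

variable {ι κ A : Type*} [LinearOrder ι]

/-- The product of `f` over a finset in increasing order of the index, a substitute for `∏` in
noncommutative monoids: unlike `Finset.noncommProd`, it asks for no commutation of the factors.
The projector `sectionProj P U s` is such a product over `U.attach`. -/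
def sortedProd [Monoid A] (s : Finset ι) (f : ι → A) : A :=
  (s.sort.map f).prod

lemma sortedProd_map [Monoid A] [LinearOrder κ] (s : Finset ι) (e : ι ↪o κ) (f : κ → A) :
    sortedProd (s.map e.toEmbedding) f = sortedProd s (f ∘ e) := by
  have sort_map : s.sort.map e = (s.map e.toEmbedding).sort :=
    (e.strictMono.strictMonoOn _).map_finsetSort
  rw [sortedProd, ← sort_map, List.map_map, sortedProd]

lemma sortedProd_attach [Monoid A] (s : Finset ι) (f : ι → A) :
    sortedProd s.attach (fun i => f i) = sortedProd s f := by
  conv_rhs => rw [← s.attach_map_val]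
  exact (sortedProd_map s.attach (OrderEmbedding.subtype (· ∈ s)) f).symm

lemma sort_filter (s : Finset ι) (p : ι → Prop) [DecidablePred p] :
    (s.filter p).sort = s.sort.filter p :=
  (sortedLT_sort _).pairwise.eq_of_mem_iff ((sortedLT_sort s).pairwise.filter _) (by simp)

lemma list_prod_map_filter_of_eq_one [Monoid A] (l : List κ) (p : κ → Prop) [DecidablePred p]
    (f : κ → A) (hf : ∀ i ∈ l, ¬ p i → f i = 1) :
    ((l.filter p).map f).prod = (l.map f).prod := by
  induction l with
  | nil => rfl
  | cons i l ih =>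
    rw [List.forall_mem_cons] at hf
    by_cases hi : p i
    · simp [hi, ih hf.2]
    · simp [hi, ih hf.2, hf.1 hi]

lemma sortedProd_subset [Monoid A] {s t : Finset ι} (hst : s ⊆ t) (f : ι → A)
    (hf : ∀ i ∈ t, i ∉ s → f i = 1) : sortedProd s f = sortedProd t f := by
  have filter_mem : t.filter (· ∈ s) = s := by rw [filter_mem_eq_inter, inter_eq_right.mpr hst]
  conv_lhs => rw [← filter_mem]
  rw [sortedProd, sort_filter]
  exact list_prod_map_filter_of_eq_one _ _ f (by simpa using hf)

lemma list_prod_map_sum [Semiring A] [Fintype κ] [DecidableEq κ] {α : κ → Type*} {l : List κ}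
    (nodup : l.Nodup) (mem : ∀ i, i ∈ l) (t : ∀ i, Finset (α i)) (f : ∀ i, α i → A) :
    (l.map fun i => ∑ a ∈ t i, f i a).prod
      = ∑ s ∈ Fintype.piFinset t, (l.map fun i => f i (s i)).prod := by
  -- The product along `l` is multilinear in its factors, even over a noncommutative semiring.
  let prodAlong : MultilinearMap ℕ (fun _ : κ => A) A :=
    (MultilinearMap.mkPiAlgebraFin ℕ l.length A).domDomCongr (nodup.getEquivOfForallMemList l mem)
  have prodAlong_apply (g : κ → A) : prodAlong g = (l.map g).prod := by
    change (List.ofFn fun i => g (l.get i)).prod = _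
    rw [List.ofFn_comp', List.ofFn_get]
  simp only [← prodAlong_apply]
  exact prodAlong.map_sum_finset f t

lemma sortedProd_univ_sum [Semiring A] [Fintype ι] {α : ι → Type*} (t : ∀ i, Finset (α i))
    (f : ∀ i, α i → A) :
    sortedProd univ (fun i => ∑ a ∈ t i, f i a)
      = ∑ s ∈ Fintype.piFinset t, sortedProd univ fun i => f i (s i) :=
  list_prod_map_sum (sort_nodup _ _) (by simp) t f

end SortedProd

section Marginal

variable {M A B : Type*} {O : M → Type*} [LinearOrder M] [∀ m, Fintype (O m)]
  [∀ m, DecidableEq (O m)]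

/-- The outcomes at `m` available to a section over a superset of `V` that restricts to `s₀`. -/
def extensionOutcomes {V : Finset M} (s₀ : ∀ m : V, O m) (m : M) : Finset (O m) :=
  if h : m ∈ V then {s₀ ⟨m, h⟩} else univ

lemma filter_restrict₂_eq_piFinset {U V : Finset M} (hVU : V ⊆ U) (s₀ : ∀ m : V, O m) :
    univ.filter (fun s : ∀ m : U, O m => restrict₂ hVU s = s₀)
      = Fintype.piFinset fun m : U => extensionOutcomes s₀ m := by
  ext s
  simp only [mem_filter_univ, Fintype.mem_piFinset]
  constructor
  · rintro rfl m
    by_cases hm : m.1 ∈ V <;> simp [extensionOutcomes, hm]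
  · intro hs
    funext m
    simpa [extensionOutcomes] using hs ⟨m, hVU m.2⟩

lemma sum_sortedProd_of_restrict₂_eq [Semiring A] (P : ∀ m, O m → A) {U V : Finset M}
    (hVU : V ⊆ U) (hsum : ∀ m ∈ U \ V, ∑ o, P m o = 1) (s₀ : ∀ m : V, O m) :
    ∑ s ∈ univ.filter (fun s : ∀ m : U, O m => restrict₂ hVU s = s₀),
        sortedProd U.attach (fun m => P m (s m))
      = sortedProd V.attach fun m => P m (s₀ m) := by
  let factor (m : M) : A := ∑ o ∈ extensionOutcomes s₀ m, P m o
  have factor_of_mem (m : V) : factor m = P m (s₀ m) := by simp [factor, extensionOutcomes]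
  have factor_of_notMem (m : M) (hU : m ∈ U) (hV : m ∉ V) : factor m = 1 := by
    simpa [factor, extensionOutcomes, hV] using hsum m (mem_sdiff.mpr ⟨hU, hV⟩)
  calc
    _ = sortedProd U.attach (fun m => factor m) := by
      rw [filter_restrict₂_eq_piFinset]
      exact (sortedProd_univ_sum _ fun (m : U) o => P m o).symm
    _ = sortedProd U factor := sortedProd_attach U factor
    _ = sortedProd V factor := (sortedProd_subset hVU factor factor_of_notMem).symm
    _ = sortedProd V.attach (fun m => factor m) := (sortedProd_attach V factor).symm
    _ = sortedProd V.attach (fun m => P m (s₀ m)) := by simp only [factor_of_mem]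

theorem generalized_no_signalling_general [Semiring A] [AddCommMonoid B] (φ : A →+ B)
    (P : ∀ m, O m → A) (C C' : Finset M) (hsum : ∀ m ∈ symmDiff C C', ∑ o, P m o = 1)
    (s₀ : ∀ m : ↥(C ∩ C'), O m) :
    (∑ s ∈ univ.filter (fun s : ∀ m : C, O m => restrict₂ inter_subset_left s = s₀),
        φ (sortedProd C.attach fun m => P m (s m)))
      = (∑ s' ∈ univ.filter (fun s' : ∀ m : C', O m => restrict₂ inter_subset_right s' = s₀),
        φ (sortedProd C'.attach fun m => P m (s' m))) ∧
    (∑ s ∈ univ.filter (fun s : ∀ m : C, O m => restrict₂ inter_subset_left s = s₀),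
        φ (sortedProd C.attach fun m => P m (s m)))
      = φ (sortedProd (C ∩ C').attach fun m => P m (s₀ m)) := by
  have marginal_left := sum_sortedProd_of_restrict₂_eq P inter_subset_left
    (fun m hm => hsum m (by grind [mem_symmDiff])) s₀
  have marginal_right := sum_sortedProd_of_restrict₂_eq P inter_subset_right
    (fun m hm => hsum m (by grind [mem_symmDiff])) s₀
  simp only [← map_sum, marginal_left, marginal_right, and_self]

end Marginal

/-- **Generalized no-signalling.** Let `ρ` be a state on `ℂ^d` and, for each
measurement `m` in `C ∪ C'`, let `(P m o)_{o ∈ O}` be orthogonal projections summing to the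
identity, with projections of distinct measurements within `C` commuting, and likewise within
`C'`.  Then for every section `s₀` over `C ∩ C'`, the marginal over sections of `C` of the Born
probabilities `ρ_C(s) = Tr(ρ P_s)` agrees with the marginal over sections of `C'`, and both
equal `ρ_{C∩C'}(s₀)`. -/
theorem generalized_no_signalling
    {d : ℕ} {Meas O : Type} [LinearOrder Meas] [Fintype O] [DecidableEq O]
    (ρ : Matrix (Fin d) (Fin d) ℂ) (hpsd : ρ.PosSemidef) (htr : ρ.trace = 1)
    (C C' : Finset Meas)
    (P : Meas → O → Matrix (Fin d) (Fin d) ℂ)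
    (hherm : ∀ m ∈ C ∪ C', ∀ o, (P m o).IsHermitian)
    (hidem : ∀ m ∈ C ∪ C', ∀ o, P m o * P m o = P m o)
    (hsum : ∀ m ∈ C ∪ C', ∑ o, P m o = 1)
    (hcommC : ∀ m ∈ C, ∀ m' ∈ C, m ≠ m' → ∀ o o', Commute (P m o) (P m' o'))
    (hcommC' : ∀ m ∈ C', ∀ m' ∈ C', m ≠ m' → ∀ o o', Commute (P m o) (P m' o')) :
    ∀ s₀ : {x // x ∈ C ∩ C'} → O,
      (∑ s ∈ univ.filter (fun s : {x // x ∈ C} → O =>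
          resSec (show C ∩ C' ⊆ C from inter_subset_left) s = s₀),
        (ρ * sectionProj P C s).trace)
        = (∑ s' ∈ univ.filter (fun s' : {x // x ∈ C'} → O =>
            resSec (show C ∩ C' ⊆ C' from inter_subset_right) s' = s₀),
          (ρ * sectionProj P C' s').trace) ∧
      (∑ s ∈ univ.filter (fun s : {x // x ∈ C} → O =>
          resSec (show C ∩ C' ⊆ C from inter_subset_left) s = s₀),
        (ρ * sectionProj P C s).trace)
        = (ρ * sectionProj P (C ∩ C') s₀).trace := by
  -- `resSec` and `sectionProj P U` unfold to `restrict₂` and to a `sortedProd` over `U.attach`.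
  exact generalized_no_signalling_general
    ((Matrix.traceAddMonoidHom (Fin d) ℂ).comp (AddMonoidHom.mulLeft ρ)) P C C'
    fun m hm => hsum m (symmDiff_le_sup (α := Finset Meas) hm)
end
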